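/- Let (K,d) be a metric space in which every set of finite diameter is relatively compact, and let (K_{i(e)}, w_e, p_e)_{e∈E} be a contractive Markov system with average contracting rate a ∈ (0,1) such that K_1,…,K_N are nonempty open subsets partitioning K and each restriction p_e|_{K_{i(e)}} is continuous on K_{i(e)}. Let μ be an invariant Borel probability measure of the system. Then μ is the unique invariant Borel probability measure if and only if for every x ∈ K and every bounded continuous function g : K → ℝ, the Cesàro averages (1/n)∑_{k=1}^n (U^k g)(x) converge to ∫ g dμ as n → ∞. -/

import Mathlib

open MeasureTheory Filter Topology
open scoped ENNReal

/-- A contractive Markov system (CMS) on a metric space `K`, with vertex set `Fin N`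
and (finite) edge set `E`. -/
structure CMS (K : Type*) [MetricSpace K] [MeasurableSpace K]
    (N : ℕ) (E : Type*) [Fintype E] where
  ι : E → Fin N
  τ : E → Fin N
  Ks : Fin N → Set K
  Ks_nonempty : ∀ i, (Ks i).Nonempty
  Ks_meas : ∀ i, MeasurableSet (Ks i)
  Ks_disj : ∀ i j, i ≠ j → Disjoint (Ks i) (Ks j)
  Ks_cover : (⋃ i, Ks i) = Set.univ
  w : E → K → K
  w_meas : ∀ e, Measurable (w e)
  w_maps : ∀ e, Set.MapsTo (w e) (Ks (ι e)) (Ks (τ e))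
  p : E → K → ℝ
  p_meas : ∀ e, Measurable (p e)
  p_nonneg : ∀ e x, 0 ≤ p e x
  p_sum_one : ∀ x, ∑ e, p e x = 1
  p_zero : ∀ e x, x ∉ Ks (ι e) → p e x = 0
  a : ℝ
  a_pos : 0 < a
  a_lt_one : a < 1
  contractive : ∀ i, ∀ x ∈ Ks i, ∀ y ∈ Ks i,
    ∑ e, p e x * dist (w e x) (w e y) ≤ a * dist x y

namespace CMS

variable {K : Type*} [MetricSpace K] [MeasurableSpace K]
  {N : ℕ} {E : Type*} [Fintype E]

/-- The Markov operator `U` acting on functions. -/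
noncomputable def Ufun (S : CMS K N E) (f : K → ℝ) : K → ℝ :=
  fun x => ∑ e, S.p e x * f (S.w e x)

/-- The adjoint Markov operator `U*` acting on measures. -/
noncomputable def adjoint (S : CMS K N E) (ν : Measure K) : Measure K :=
  ν.bind fun x => ∑ e, ENNReal.ofReal (S.p e x) • Measure.dirac (S.w e x)

/-- The weight `p_{e₁}(x) p_{e₂}(w_{e₁} x) ⋯` of a cylinder `[e₁, …, e_k]` started at `x`. -/
noncomputable def cylWeight (S : CMS K N E) : K → List E → ℝ
  | _, [] => 1
  | x, e :: es => S.p e x * S.cylWeight (S.w e x) es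

/-- `M` is the generalized Markov measure associated with the CMS and invariant measure `μ`. -/
def IsGMarkovMeasure [MeasurableSpace E] (S : CMS K N E)
    (μ : Measure K) (M : Measure (ℤ → E)) : Prop :=
  IsProbabilityMeasure M ∧
  ∀ (m : ℤ) (es : List E),
    M {σ | ∀ j : Fin es.length, σ (m + (j : ℕ)) = es.get j} =
      ENNReal.ofReal (∫ x, S.cylWeight x es ∂μ)

/-- `comp S σ n = w_{σ 0} ∘ w_{σ (-1)} ∘ ⋯ ∘ w_{σ (-n)}`. -/
noncomputable def comp (S : CMS K N E) (σ : ℤ → E) : ℕ → K → K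
  | 0, x => S.w (σ 0) x
  | n + 1, x => S.comp σ n (S.w (σ (-((n : ℤ) + 1))) x)

/-- `codeSeq S xs σ n = w_{σ 0} ∘ ⋯ ∘ w_{σ (-n)} (x_{i(σ (-n))})`. -/
noncomputable def codeSeq (S : CMS K N E) (xs : Fin N → K) (σ : ℤ → E) (n : ℕ) : K :=
  S.comp σ n (xs (S.ι (σ (-(n : ℤ)))))

end CMS

/-- The left shift `S` on `Σ = E^ℤ`. -/
def shiftL (E : Type*) : (ℤ → E) → ℤ → E := fun σ j => σ (j + 1)

/-- The `n`-fold left shift `S^n` on `Σ = E^ℤ`, `n ∈ ℤ`. -/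
def shiftZ (E : Type*) (n : ℤ) : (ℤ → E) → ℤ → E := fun σ j => σ (j + n)

namespace CMS

variable {K : Type*} [MetricSpace K] [MeasurableSpace K]
  {N : ℕ} {E : Type*} [Fintype E]

/-- The subshift `Σ_G` of (two-sided) paths of the directed multigraph. -/
def SigmaG (S : CMS K N E) : Set (ℤ → E) :=
  {σ | ∀ j : ℤ, S.τ (σ j) = S.ι (σ (j + 1))}

/-- The set `D` of paths where the coding limit exists. -/
def Dset (S : CMS K N E) (xs : Fin N → K) : Set (ℤ → E) :=
  {σ ∈ S.SigmaG | ∃ L : K, Tendsto (S.codeSeq xs σ) atTop (nhds L)}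

/-- `Y = ⋂_{n ∈ ℤ} S^n(D)`. -/
def Yset (S : CMS K N E) (xs : Fin N → K) : Set (ℤ → E) :=
  ⋂ n : ℤ, shiftZ E n '' S.Dset xs

/-- The coding map `F`. -/
noncomputable def F [Nonempty K] (S : CMS K N E) (xs : Fin N → K) (σ : ℤ → E) : K :=
  limUnder atTop (S.codeSeq xs σ)

end CMS

/-- The modulus of uniform continuity of `f` on the set `A`. -/
noncomputable def modulusOn {K : Type*} [MetricSpace K] (f : K → ℝ) (A : Set K) (t : ℝ) : ℝ :=
  sSup {s | ∃ x ∈ A, ∃ y ∈ A, dist x y ≤ t ∧ s = |f x - f y|}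

/-- Dini-continuity of `f` on `A`: `∫_0^c φ(t)/t dt < ∞` for some `c > 0`. -/
def DiniOn {K : Type*} [MetricSpace K] (f : K → ℝ) (A : Set K) : Prop :=
  ∃ c > 0, ∫⁻ t in Set.Ioc (0 : ℝ) c, ENNReal.ofReal (modulusOn f A t / t) < ⊤

/-!
Started at a point `x₀`, the chain moves by `U*`; let `ρ n` be the average of its first `n` laws.
Integrating `g` against `ρ n` gives the Cesàro average of `U^k g` at `x₀`, and the contraction
yields the Foster–Lyapunov drift `U V ≤ a V + b` for `V = d(·, x₀)`, so the integrals of `V` against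
the `ρ n` are bounded. Balls being relatively compact, `(ρ n)` is tight. Since the vertex sets are
open, each `w e` is continuous wherever `p e` does not vanish, so `U` preserves continuity and the
weak cluster points of `(ρ n)` are invariant (Krylov–Bogolyubov). If `μ` is the only invariant
law, Prokhorov's theorem then gives `ρ n → μ` weakly. Conversely, integrating the Cesàro averages
against an invariant law `ν` leaves `∫ g dν` unchanged, while by dominated convergence the limit is
`∫ g dμ`.
-/

open ProbabilityTheory
open scoped BoundedContinuousFunction NNReal

lemma tendsto_sum_Icc_iterate_div_iff {α : Type*} {T : α → α} {φ : α → ℝ} {a : α} {l : ℝ}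
    (hbdd : Bornology.IsBounded (Set.range fun k => φ (T^[k] a))) :
    Tendsto (fun n : ℕ => (∑ k ∈ Finset.Icc 1 n, φ (T^[k] a)) / n) atTop (𝓝 l) ↔
      Tendsto (birkhoffAverage ℝ T φ · a) atTop (𝓝 l) := by
  have hshift (n : ℕ) :
      (∑ k ∈ Finset.Icc 1 n, φ (T^[k] a)) / n = birkhoffAverage ℝ T φ n (T a) := by
    rw [birkhoffAverage, birkhoffSum, smul_eq_mul, div_eq_inv_mul, Finset.range_eq_Ico,
      ← Finset.Ico_succ_right_eq_Icc]
    congr 1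
    exact (Finset.sum_Ico_add' (fun k => φ (T^[k] a)) 0 n 1).symm
  simp_rw [hshift]
  have hdiff := tendsto_birkhoffAverage_apply_sub_birkhoffAverage ℝ hbdd
  exact ⟨fun h => by simpa using h.sub hdiff, fun h => by simpa using h.add hdiff⟩

lemma norm_birkhoffAverage_le {α : Type*} (𝕜 : Type*) {G : Type*} [RCLike 𝕜]
    [SeminormedAddCommGroup G] [NormedSpace 𝕜 G] {T : α → α} {φ : α → G} {a : α} {C : ℝ}
    (hC : ∀ k, ‖φ (T^[k] a)‖ ≤ C) (n : ℕ) : ‖birkhoffAverage 𝕜 T φ n a‖ ≤ C := by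
  have hC0 : 0 ≤ C := (norm_nonneg _).trans (hC 0)
  calc ‖birkhoffAverage 𝕜 T φ n a‖ = (n : ℝ)⁻¹ * ‖∑ k ∈ Finset.range n, φ (T^[k] a)‖ := by
        simp [birkhoffAverage, birkhoffSum, norm_smul]
    _ ≤ (n : ℝ)⁻¹ * (n * C) := by
        gcongr
        simpa using norm_sum_le_of_le (Finset.range n) fun k _ => hC k
    _ ≤ C := by
        rw [← mul_assoc]
        exact mul_le_of_le_one_left hC0 inv_mul_le_one

lemma isTightMeasureSet_of_lintegral_le {X : Type*} [TopologicalSpace X] [MeasurableSpace X]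
    {𝓢 : Set (Measure X)} {V : X → ℝ≥0∞} (hV : Measurable V)
    (hcpt : ∀ r : ℝ≥0, IsCompact (closure {x | V x < r})) {M : ℝ≥0∞} (hM : M ≠ ∞)
    (hle : ∀ ρ ∈ 𝓢, ∫⁻ x, V x ∂ρ ≤ M) : IsTightMeasureSet 𝓢 := by
  rw [isTightMeasureSet_iff_exists_isCompact_measure_compl_le]
  intro ε hε
  obtain ⟨δ, hδ, hδε⟩ := ENNReal.exists_nnreal_pos_mul_lt hM hε.ne'
  refine ⟨_, hcpt δ⁻¹, fun ρ hρ => ?_⟩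
  calc ρ (closure {x | V x < (δ⁻¹ : ℝ≥0)})ᶜ
      ≤ ρ {x | (δ⁻¹ : ℝ≥0) ≤ V x} :=
        measure_mono fun x hx => not_lt.1 fun h => hx (subset_closure (Set.mem_ofPred.2 h))
    _ ≤ (∫⁻ x, V x ∂ρ) / (δ⁻¹ : ℝ≥0) :=
        meas_ge_le_lintegral_div hV.aemeasurable (by simp [hδ.ne']) ENNReal.coe_ne_top
    _ ≤ M / (δ⁻¹ : ℝ≥0) := by gcongr; exact hle ρ hρ
    _ = δ * M := by
        rw [ENNReal.coe_inv hδ.ne', ENNReal.div_eq_inv_mul, inv_inv]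
    _ ≤ ε := hδε.le

section MarkovKernel

variable {X : Type*} [MeasurableSpace X] {κ : Kernel X X} {ν : Measure X} {f : X → ℝ} {C : ℝ}

/-- The Markov operator of a kernel `κ` on real functions, dual to `ν ↦ κ ∘ₘ ν` on measures. Being
a Bochner integral, it is meaningful only where `f` is `κ x`-integrable; below, `f` is bounded. -/
noncomputable def markovOperator (κ : Kernel X X) (f : X → ℝ) (x : X) : ℝ :=
  ∫ y, f y ∂(κ x)

lemma measurable_markovOperator_iterate (hf : Measurable f) (k : ℕ) :
    Measurable ((markovOperator κ)^[k] f) := by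
  induction k with
  | zero => exact hf
  | succ k ih =>
    rw [Function.iterate_succ_apply']
    exact ih.stronglyMeasurable.integral_kernel.measurable

lemma abs_markovOperator_iterate_le [IsMarkovKernel κ] (hC : ∀ x, |f x| ≤ C) (k : ℕ) (x : X) :
    |(markovOperator κ)^[k] f x| ≤ C := by
  induction k generalizing x with
  | zero => exact hC x
  | succ k ih =>
    rw [Function.iterate_succ_apply']
    simpa [markovOperator] using norm_integral_le_of_norm_le_const (f := (markovOperator κ)^[k] f)
      (ae_of_all (κ x) ih)

lemma integrable_markovOperator_iterate [IsMarkovKernel κ] [IsFiniteMeasure ν] (hf : Measurable f)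
    (hC : ∀ x, |f x| ≤ C) (k : ℕ) : Integrable ((markovOperator κ)^[k] f) ν :=
  .of_bound (measurable_markovOperator_iterate hf k).aestronglyMeasurable C
    (ae_of_all _ (abs_markovOperator_iterate_le hC k))

lemma integral_bind_eq_integral_markovOperator (hf : Integrable f (κ ∘ₘ ν)) :
    ∫ x, f x ∂(κ ∘ₘ ν) = ∫ x, markovOperator κ f x ∂ν := by
  rw [Measure.comp_eq_comp_const_apply] at hf ⊢
  exact Kernel.integral_comp hf

instance isProbabilityMeasure_bind_iterate [IsMarkovKernel κ] [IsProbabilityMeasure ν] (k : ℕ) :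
    IsProbabilityMeasure ((κ ∘ₘ ·)^[k] ν) := by
  induction k with
  | zero => assumption
  | succ k ih =>
    rw [Function.iterate_succ_apply']
    infer_instance

lemma integral_bind_iterate_eq_integral_markovOperator_iterate [IsMarkovKernel κ]
    [IsProbabilityMeasure ν] (hf : Measurable f) (hC : ∀ x, |f x| ≤ C) (k : ℕ) :
    ∫ x, f x ∂((κ ∘ₘ ·)^[k] ν) = ∫ x, (markovOperator κ)^[k] f x ∂ν := by
  induction k generalizing ν with
  | zero => rfl
  | succ k ih =>
    rw [Function.iterate_succ_apply, ih, Function.iterate_succ_apply',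
      integral_bind_eq_integral_markovOperator (integrable_markovOperator_iterate hf hC k)]

/-- The mean occupation measure at times `0, …, n - 1` of the Markov chain with transition kernel
`κ` and initial law `ν`. It is a probability measure for `n ≠ 0` and the zero measure for `n = 0`.
-/
noncomputable def meanOccupation (κ : Kernel X X) (ν : Measure X) (n : ℕ) : Measure X :=
  birkhoffAverage ℝ≥0 (κ ∘ₘ ·) id n ν

lemma meanOccupation_eq (κ : Kernel X X) (ν : Measure X) (n : ℕ) :
    meanOccupation κ ν n = (n : ℝ≥0)⁻¹ • ∑ k ∈ Finset.range n, (κ ∘ₘ ·)^[k] ν :=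
  rfl

instance isProbabilityMeasure_meanOccupation [IsMarkovKernel κ] [IsProbabilityMeasure ν] (n : ℕ)
    [NeZero n] : IsProbabilityMeasure (meanOccupation κ ν n) := by
  refine ⟨?_⟩
  simp [meanOccupation_eq, ENNReal.smul_def, ENNReal.inv_mul_cancel, NeZero.ne n]

lemma meanOccupation_eq_self (hν : κ.Invariant ν) {n : ℕ} (hn : n ≠ 0) :
    meanOccupation κ ν n = ν :=
  have hfix : Function.IsFixedPt (κ ∘ₘ ·) ν := hν
  hfix.birkhoffAverage_eq ℝ≥0 id (Nat.cast_ne_zero.2 hn)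

lemma lintegral_meanOccupation_le {V : X → ℝ≥0∞} {M : ℝ≥0∞}
    (hM : ∀ k, ∫⁻ x, V x ∂((κ ∘ₘ ·)^[k] ν) ≤ M) (n : ℕ) :
    ∫⁻ x, V x ∂(meanOccupation κ ν n) ≤ M := by
  calc ∫⁻ x, V x ∂(meanOccupation κ ν n)
      = ((n : ℝ≥0)⁻¹ : ℝ≥0) * ∑ k ∈ Finset.range n, ∫⁻ x, V x ∂((κ ∘ₘ ·)^[k] ν) := by
        simp only [meanOccupation_eq, ENNReal.smul_def, lintegral_smul_measure,
          lintegral_finsetSum_measure, smul_eq_mul]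
    _ ≤ ((n : ℝ≥0)⁻¹ : ℝ≥0) * ∑ _k ∈ Finset.range n, M := by gcongr; exact hM _
    _ = ((n : ℝ≥0)⁻¹ * n : ℝ≥0) * M := by simp [mul_assoc]
    _ ≤ M := mul_le_of_le_one_left' (mod_cast inv_mul_le_one)

lemma integral_meanOccupation [IsMarkovKernel κ] [IsProbabilityMeasure ν] (hf : Measurable f)
    (hC : ∀ x, |f x| ≤ C) (n : ℕ) :
    ∫ x, f x ∂(meanOccupation κ ν n) =
      birkhoffAverage ℝ (markovOperator κ) (fun h => ∫ x, h x ∂ν) n f := by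
  have hint (k : ℕ) : Integrable f ((κ ∘ₘ ·)^[k] ν) :=
    .of_bound hf.aestronglyMeasurable C (ae_of_all _ hC)
  rw [meanOccupation_eq, integral_smul_nnreal_measure,
    integral_finsetSum_measure fun k _ => hint k, birkhoffAverage, birkhoffSum]
  simp [integral_bind_iterate_eq_integral_markovOperator_iterate hf hC, NNReal.smul_def]

lemma integral_birkhoffAverage_markovOperator [IsMarkovKernel κ] [IsFiniteMeasure ν]
    (hf : Measurable f) (hC : ∀ x, |f x| ≤ C) (n : ℕ) :
    ∫ x, birkhoffAverage ℝ (markovOperator κ) (· x) n f ∂ν =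
      birkhoffAverage ℝ (markovOperator κ) (fun h => ∫ x, h x ∂ν) n f := by
  simp only [birkhoffAverage, birkhoffSum, integral_smul]
  rw [integral_finsetSum _ fun k _ => integrable_markovOperator_iterate hf hC k]

lemma integral_meanOccupation_dirac [IsMarkovKernel κ] (hf : Measurable f) (hC : ∀ x, |f x| ≤ C)
    (n : ℕ) (x : X) :
    ∫ y, f y ∂(meanOccupation κ (.dirac x) n) =
      birkhoffAverage ℝ (markovOperator κ) (· x) n f := by
  have hdirac (k : ℕ) : ∫ y, (markovOperator κ)^[k] f y ∂(.dirac x) = (markovOperator κ)^[k] f x :=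
    integral_dirac' _ x (measurable_markovOperator_iterate hf k).stronglyMeasurable
  simp only [integral_meanOccupation hf hC, birkhoffAverage, birkhoffSum, hdirac]

lemma integral_eq_of_tendsto_birkhoffAverage [IsMarkovKernel κ] [IsProbabilityMeasure ν]
    (hν : κ.Invariant ν) {c : ℝ} (hf : Measurable f) (hC : ∀ x, |f x| ≤ C)
    (hlim : ∀ x, Tendsto (birkhoffAverage ℝ (markovOperator κ) (· x) · f) atTop (𝓝 c)) :
    ∫ x, f x ∂ν = c := by
  have hconst : ∀ᶠ n : ℕ in atTop,
      ∫ x, birkhoffAverage ℝ (markovOperator κ) (· x) n f ∂ν = ∫ x, f x ∂ν := by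
    filter_upwards [eventually_ne_atTop 0] with n hn
    rw [integral_birkhoffAverage_markovOperator hf hC, ← integral_meanOccupation hf hC,
      meanOccupation_eq_self hν hn]
  have hmeas (n : ℕ) : Measurable fun x => birkhoffAverage ℝ (markovOperator κ) (· x) n f := by
    simp only [birkhoffAverage, birkhoffSum]
    exact (Finset.measurable_fun_sum _ fun k _ =>
      measurable_markovOperator_iterate hf k).const_smul ((n : ℝ)⁻¹)
  have hconv : Tendsto (fun n : ℕ => ∫ x, birkhoffAverage ℝ (markovOperator κ) (· x) n f ∂ν)
      atTop (𝓝 (∫ _, c ∂ν)) :=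
    tendsto_integral_of_dominated_convergence (fun _ => C)
      (fun n => (hmeas n).aestronglyMeasurable) (integrable_const C)
      (fun n => ae_of_all _ fun x =>
        norm_birkhoffAverage_le ℝ (fun k => abs_markovOperator_iterate_le hC k x) n)
      (ae_of_all _ hlim)
  simpa using tendsto_nhds_unique (tendsto_const_nhds.congr' (hconst.mono fun _ => Eq.symm)) hconv

lemma tendsto_integral_markovOperator_sub_integral_meanOccupation [IsMarkovKernel κ]
    [IsProbabilityMeasure ν] (hf : Measurable f) (hC : ∀ x, |f x| ≤ C) :
    Tendsto (fun n => ∫ x, markovOperator κ f x ∂(meanOccupation κ ν n) -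
      ∫ x, f x ∂(meanOccupation κ ν n)) atTop (𝓝 0) := by
  have hstep (n : ℕ) : ∫ x, markovOperator κ f x ∂(meanOccupation κ ν n) =
      birkhoffAverage ℝ (markovOperator κ) (fun h => ∫ x, h x ∂ν) n (markovOperator κ f) :=
    integral_meanOccupation (measurable_markovOperator_iterate hf 1)
      (abs_markovOperator_iterate_le hC 1) n
  simp_rw [integral_meanOccupation hf hC, hstep]
  refine tendsto_birkhoffAverage_apply_sub_birkhoffAverage ℝ
    (isBounded_iff_forall_norm_le.2 ⟨C, ?_⟩)
  rintro _ ⟨k, rfl⟩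
  simpa using norm_integral_le_of_norm_le_const (f := (markovOperator κ)^[k] f)
    (ae_of_all ν (abs_markovOperator_iterate_le hC k))

lemma lintegral_bind_iterate_le_of_drift [IsMarkovKernel κ] [IsProbabilityMeasure ν]
    {V : X → ℝ≥0∞} (hV : Measurable V) {a b : ℝ≥0∞} (ha : a < 1)
    (hdrift : ∀ x, ∫⁻ y, V y ∂(κ x) ≤ a * V x + b) (k : ℕ) :
    ∫⁻ x, V x ∂((κ ∘ₘ ·)^[k] ν) ≤ ∫⁻ x, V x ∂ν + b / (1 - a) := by
  have hfix : a * (b / (1 - a)) + b = b / (1 - a) := by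
    calc a * (b / (1 - a)) + b = a * (b / (1 - a)) + (1 - a) * (b / (1 - a)) := by
          rw [ENNReal.mul_div_cancel (tsub_pos_of_lt ha).ne' (by finiteness)]
      _ = b / (1 - a) := by rw [← add_mul, add_tsub_cancel_of_le ha.le, one_mul]
  induction k with
  | zero => exact le_self_add
  | succ k ih =>
    rw [Function.iterate_succ_apply', Measure.lintegral_bind κ.aemeasurable hV.aemeasurable]
    calc ∫⁻ x, ∫⁻ y, V y ∂(κ x) ∂((κ ∘ₘ ·)^[k] ν)
        ≤ ∫⁻ x, a * V x + b ∂((κ ∘ₘ ·)^[k] ν) := lintegral_mono hdrift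
      _ = a * ∫⁻ x, V x ∂((κ ∘ₘ ·)^[k] ν) + b := by
          rw [lintegral_add_right _ measurable_const, lintegral_const_mul _ hV]
          simp
      _ ≤ a * (∫⁻ x, V x ∂ν + b / (1 - a)) + b := by gcongr
      _ = a * ∫⁻ x, V x ∂ν + b / (1 - a) := by rw [mul_add, add_assoc, hfix]
      _ ≤ ∫⁻ x, V x ∂ν + b / (1 - a) := by
          gcongr
          exact mul_le_of_le_one_left' ha.le

lemma isTightMeasureSet_range_meanOccupation_of_drift [TopologicalSpace X] [IsMarkovKernel κ]
    [IsProbabilityMeasure ν] {V : X → ℝ≥0∞} (hV : Measurable V)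
    (hcpt : ∀ r : ℝ≥0, IsCompact (closure {x | V x < r})) {a b : ℝ≥0∞} (ha : a < 1) (hb : b ≠ ∞)
    (hdrift : ∀ x, ∫⁻ y, V y ∂(κ x) ≤ a * V x + b) (hν : ∫⁻ x, V x ∂ν ≠ ∞) :
    IsTightMeasureSet (Set.range (meanOccupation κ ν)) := by
  refine isTightMeasureSet_of_lintegral_le hV hcpt
    (ENNReal.add_ne_top.2 ⟨hν, ENNReal.div_ne_top hb (tsub_pos_of_lt ha).ne'⟩) ?_
  rintro _ ⟨n, rfl⟩
  exact lintegral_meanOccupation_le (lintegral_bind_iterate_le_of_drift hV ha hdrift) n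

end MarkovKernel

section Feller

variable {X : Type*} [TopologicalSpace X] [MeasurableSpace X] {κ : Kernel X X}

/-- The Feller property: the Markov operator maps bounded continuous functions to continuous
functions (which are automatically bounded when `κ` is a Markov kernel). -/
def IsFeller (κ : Kernel X X) : Prop :=
  ∀ g : X →ᵇ ℝ, Continuous (markovOperator κ g)

variable [HasOuterApproxClosed X] [BorelSpace X] [IsMarkovKernel κ]

lemma IsFeller.invariant_of_mapClusterPt (hκ : IsFeller κ) {ι : Type*} {l : Filter ι}
    {P : ι → ProbabilityMeasure X} {ρ : ProbabilityMeasure X}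
    (hP : ∀ g : X →ᵇ ℝ,
      Tendsto (fun i => ∫ x, markovOperator κ g x ∂(P i) - ∫ x, g x ∂(P i)) l (𝓝 0))
    (hρ : MapClusterPt ρ l P) : κ.Invariant (ρ : Measure X) := by
  refine ext_of_forall_integral_eq_of_IsFiniteMeasure fun g => ?_
  rw [integral_bind_eq_integral_markovOperator (g.integrable _)]
  let Ug : X →ᵇ ℝ := .ofNormedAddCommGroup (markovOperator κ g) (hκ g) ‖g‖
    (abs_markovOperator_iterate_le g.norm_coe_le_norm 1)
  have hcont : Continuous fun σ : ProbabilityMeasure X => ∫ x, Ug x ∂σ - ∫ x, g x ∂σ :=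
    (ProbabilityMeasure.continuous_integral_boundedContinuousFunction Ug).sub
      (ProbabilityMeasure.continuous_integral_boundedContinuousFunction g)
  have hcluster := hρ.continuousAt_comp hcont.continuousAt
  exact sub_eq_zero.1 (eq_of_nhds_neBot (hcluster.clusterPt.mono (hP g)))

theorem IsFeller.tendsto_integral_meanOccupation_of_unique [T2Space X] (hκ : IsFeller κ)
    {ν μ : Measure X} [IsProbabilityMeasure ν] [IsProbabilityMeasure μ]
    (hν : IsTightMeasureSet (Set.range (meanOccupation κ ν)))
    (hμ : ∀ ρ, IsProbabilityMeasure ρ → κ.Invariant ρ → ρ = μ)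
    (g : X →ᵇ ℝ) :
    Tendsto (fun n => ∫ x, g x ∂(meanOccupation κ ν n)) atTop (𝓝 (∫ x, g x ∂μ)) := by
  let P (n : ℕ) : ProbabilityMeasure X := ⟨meanOccupation κ ν (n + 1), inferInstance⟩
  have hcompact : IsCompact (closure (Set.range P)) := by
    refine isCompact_closure_of_isTightMeasureSet (hν.subset ?_)
    rintro _ ⟨_, ⟨n, rfl⟩, rfl⟩
    exact ⟨n + 1, rfl⟩
  have hasymp (h : X →ᵇ ℝ) :
      Tendsto (fun n => ∫ x, markovOperator κ h x ∂(P n) - ∫ x, h x ∂(P n)) atTop (𝓝 0) :=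
    (tendsto_integral_markovOperator_sub_integral_meanOccupation h.continuous.measurable
      h.norm_coe_le_norm).comp (tendsto_add_atTop_nat 1)
  have hlim : Tendsto P atTop (𝓝 ⟨μ, inferInstance⟩) :=
    hcompact.tendsto_nhds_of_unique_mapClusterPt
      (.of_forall fun n => subset_closure ⟨n, rfl⟩) fun ρ _ hρ =>
        Subtype.ext (hμ ρ inferInstance (hκ.invariant_of_mapClusterPt hasymp hρ))
  exact (tendsto_add_atTop_iff_nat 1).1
    (ProbabilityMeasure.tendsto_iff_forall_integral_tendsto.1 hlim g)

theorem IsFeller.forall_invariant_eq_iff_tendsto_birkhoffAverage [T2Space X] (hκ : IsFeller κ)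
    (htight : ∀ x, IsTightMeasureSet (Set.range (meanOccupation κ (.dirac x)))) {μ : Measure X}
    [IsProbabilityMeasure μ] :
    (∀ ρ, IsProbabilityMeasure ρ → κ.Invariant ρ → ρ = μ) ↔
      ∀ (x : X) (g : X →ᵇ ℝ),
        Tendsto (birkhoffAverage ℝ (markovOperator κ) (· x) · g) atTop (𝓝 (∫ y, g y ∂μ)) := by
  refine ⟨fun hunique x g => ?_, fun hlim ρ _ hρ => ?_⟩
  · simp_rw [← integral_meanOccupation_dirac g.continuous.measurable g.norm_coe_le_norm]
    exact hκ.tendsto_integral_meanOccupation_of_unique (htight x) hunique g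
  · exact ext_of_forall_integral_eq_of_IsFiniteMeasure fun g =>
      integral_eq_of_tendsto_birkhoffAverage hρ g.continuous.measurable g.norm_coe_le_norm
        (hlim · g)

end Feller

lemma continuousAt_mul_of_norm_le {X R : Type*} [TopologicalSpace X] [NonUnitalSeminormedRing R]
    {p h : X → R} {x : X} {C : ℝ} (hp : ContinuousAt p x) (hh : p x ≠ 0 → ContinuousAt h x)
    (hC : ∀ y, ‖h y‖ ≤ C) : ContinuousAt (fun y => p y * h y) x := by
  by_cases hpx : p x = 0
  · rw [ContinuousAt, hpx] at hp
    rw [ContinuousAt, hpx, zero_mul]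
    exact hp.zero_mul_isBoundedUnder_le (isBoundedUnder_of ⟨C, hC⟩)
  · exact hp.mul (hh hpx)

namespace CMS

variable {K : Type*} [MetricSpace K] [MeasurableSpace K] {N : ℕ} {E : Type*} [Fintype E]
  (S : CMS K N E)

/-- The transition kernel of a contractive Markov system: from `x`, move along the edge `e` to
`w e x` with probability `p e x`. -/
noncomputable def kernel : Kernel K K where
  toFun x := ∑ e, ENNReal.ofReal (S.p e x) • Measure.dirac (S.w e x)
  measurable' := by
    refine Measure.measurable_of_measurable_coe _ fun s hs => ?_
    simp only [Measure.coe_finsetSum, Finset.sum_apply, Measure.smul_apply, smul_eq_mul]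
    exact Finset.measurable_fun_sum _ fun e _ => (S.p_meas e).ennreal_ofReal.mul
      ((Measure.measurable_coe hs).comp (Measure.measurable_dirac.comp (S.w_meas e)))

lemma kernel_apply (x : K) :
    S.kernel x = ∑ e, ENNReal.ofReal (S.p e x) • Measure.dirac (S.w e x) :=
  rfl

instance : IsMarkovKernel S.kernel where
  isProbabilityMeasure x := ⟨by
    simp [kernel_apply, ← ENNReal.ofReal_sum_of_nonneg fun e _ => S.p_nonneg e x, S.p_sum_one x]⟩

lemma lintegral_kernel [MeasurableSingletonClass K] (f : K → ℝ≥0∞) (x : K) :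
    ∫⁻ y, f y ∂(S.kernel x) = ∑ e, ENNReal.ofReal (S.p e x) * f (S.w e x) := by
  simp [kernel_apply]

lemma invariant_kernel_iff {ν : Measure K} : S.kernel.Invariant ν ↔ S.adjoint ν = ν :=
  .rfl

lemma Ufun_eq_markovOperator [MeasurableSingletonClass K] : S.Ufun = markovOperator S.kernel := by
  ext f x
  rw [markovOperator, kernel_apply, integral_finsetSum_measure fun e _ =>
    (integrable_dirac (by finiteness)).smul_measure ENNReal.ofReal_ne_top]
  simp [Ufun, S.p_nonneg]

variable {S}

lemma exists_mem_Ks (x : K) : ∃ i, x ∈ S.Ks i :=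
  Set.mem_iUnion.1 (S.Ks_cover ▸ Set.mem_univ x)

lemma continuous_p (hOpen : ∀ i, IsOpen (S.Ks i))
    (hCont : ∀ e, ContinuousOn (S.p e) (S.Ks (S.ι e))) (e : E) : Continuous (S.p e) := by
  refine continuous_iff_continuousAt.2 fun x => ?_
  obtain ⟨i, hx⟩ := S.exists_mem_Ks x
  have hnhds := (hOpen i).mem_nhds hx
  obtain rfl | hne := eq_or_ne i (S.ι e)
  · exact (hCont e).continuousAt hnhds
  · have hzero : S.p e =ᶠ[𝓝 x] fun _ => 0 := by
      filter_upwards [hnhds] with y hy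
      exact S.p_zero e y ((S.Ks_disj _ _ hne).notMem_of_mem_left hy)
    exact continuousAt_const.congr hzero.symm

lemma p_mul_dist_w_le {i : Fin N} {x y : K} (hx : x ∈ S.Ks i) (hy : y ∈ S.Ks i) (e : E) :
    S.p e x * dist (S.w e x) (S.w e y) ≤ S.a * dist x y :=
  (Finset.single_le_sum (f := fun e => S.p e x * dist (S.w e x) (S.w e y))
    (fun e _ => mul_nonneg (S.p_nonneg e x) dist_nonneg) (Finset.mem_univ e)).trans
    (S.contractive i x hx y hy)

lemma continuousAt_w (hOpen : ∀ i, IsOpen (S.Ks i)) {e : E} {x : K} (hpx : S.p e x ≠ 0) :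
    ContinuousAt (S.w e) x := by
  obtain ⟨i, hx⟩ := S.exists_mem_Ks x
  have hpos : 0 < S.p e x := (S.p_nonneg e x).lt_of_ne' hpx
  obtain ⟨r, hr, hball⟩ := Metric.isOpen_iff.1 (hOpen i) x hx
  refine continuousAt_of_locally_lipschitz hr (S.a / S.p e x) fun y hy => ?_
  rw [dist_comm, dist_comm y, div_mul_eq_mul_div, le_div_iff₀' hpos]
  exact p_mul_dist_w_le hx (hball hy) e

lemma isFeller_kernel [BorelSpace K] (hOpen : ∀ i, IsOpen (S.Ks i))
    (hCont : ∀ e, ContinuousOn (S.p e) (S.Ks (S.ι e))) : IsFeller S.kernel := by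
  intro g
  rw [← Ufun_eq_markovOperator]
  refine continuous_finsetSum _ fun e _ => continuous_iff_continuousAt.2 fun x => ?_
  exact continuousAt_mul_of_norm_le (continuous_p hOpen hCont e).continuousAt
    (fun hpx => g.continuous.continuousAt.comp (continuousAt_w hOpen hpx))
    fun y => g.norm_coe_le_norm (S.w e y)

lemma sum_p_mul_dist_w_le {i : Fin N} {x z : K} (hx : x ∈ S.Ks i) (hz : z ∈ S.Ks i) (x₀ : K) :
    ∑ e, S.p e x * dist (S.w e x) x₀ ≤
      S.a * dist x x₀ + (S.a * dist x₀ z + ∑ e, dist (S.w e z) x₀) := by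
  have hp (e : E) : S.p e x ≤ 1 := by
    rw [← S.p_sum_one x]
    exact Finset.single_le_sum (fun e _ => S.p_nonneg e x) (Finset.mem_univ e)
  calc ∑ e, S.p e x * dist (S.w e x) x₀
      ≤ ∑ e, (S.p e x * dist (S.w e x) (S.w e z) + 1 * dist (S.w e z) x₀) := by
        gcongr with e
        calc S.p e x * dist (S.w e x) x₀
            ≤ S.p e x * (dist (S.w e x) (S.w e z) + dist (S.w e z) x₀) :=
              mul_le_mul_of_nonneg_left (dist_triangle _ _ _) (S.p_nonneg e x)
          _ ≤ _ := by rw [mul_add]; gcongr; exact hp e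
    _ = ∑ e, S.p e x * dist (S.w e x) (S.w e z) + ∑ e, dist (S.w e z) x₀ := by
        simp [Finset.sum_add_distrib]
    _ ≤ S.a * (dist x x₀ + dist x₀ z) + ∑ e, dist (S.w e z) x₀ := by
        gcongr
        · exact (S.contractive i x hx z hz).trans
            (mul_le_mul_of_nonneg_left (dist_triangle _ _ _) S.a_pos.le)
    _ = _ := by ring

lemma exists_lintegral_kernel_edist_le [MeasurableSingletonClass K] (x₀ : K) :
    ∃ b : ℝ≥0, ∀ x, ∫⁻ y, edist y x₀ ∂(S.kernel x) ≤ ENNReal.ofReal S.a * edist x x₀ + b := by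
  choose z hz using S.Ks_nonempty
  obtain ⟨b, hb⟩ := Finite.exists_le fun i =>
    (S.a * dist x₀ (z i) + ∑ e, dist (S.w e (z i)) x₀).toNNReal
  refine ⟨b, fun x => ?_⟩
  obtain ⟨i, hx⟩ := S.exists_mem_Ks x
  calc ∫⁻ y, edist y x₀ ∂(S.kernel x)
      = ENNReal.ofReal (∑ e, S.p e x * dist (S.w e x) x₀) := by
        rw [lintegral_kernel, ENNReal.ofReal_sum_of_nonneg fun e _ =>
          mul_nonneg (S.p_nonneg e x) dist_nonneg]
        simp [edist_dist, ENNReal.ofReal_mul, S.p_nonneg]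
    _ ≤ ENNReal.ofReal (S.a * dist x x₀ + b) := by
        gcongr
        exact (sum_p_mul_dist_w_le hx (hz i) x₀).trans
          (by gcongr; exact Real.toNNReal_le_iff_le_coe.1 (hb i))
    _ = ENNReal.ofReal S.a * edist x x₀ + b := by
        rw [ENNReal.ofReal_add (mul_nonneg S.a_pos.le dist_nonneg) b.coe_nonneg,
          ENNReal.ofReal_mul S.a_pos.le, edist_dist, ENNReal.ofReal_coe_nnreal]

lemma isTightMeasureSet_range_meanOccupation_kernel_dirac [BorelSpace K] [ProperSpace K] (x : K) :
    IsTightMeasureSet (Set.range (meanOccupation S.kernel (.dirac x))) := by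
  obtain ⟨b, hb⟩ := S.exists_lintegral_kernel_edist_le x
  refine isTightMeasureSet_range_meanOccupation_of_drift (V := fun y => edist y x)
    (by fun_prop) (fun r => ?_) (ENNReal.ofReal_lt_one.2 S.a_lt_one) ENNReal.coe_ne_top hb
    (by simp)
  have hball : {y | edist y x < r} = Metric.ball x r := Metric.eball_coe
  exact hball ▸ Metric.isBounded_ball.isCompact_closure

lemma tendsto_cesaro_iff_tendsto_birkhoffAverage [MeasurableSingletonClass K] {g : K → ℝ} {C : ℝ}
    (hC : ∀ y, |g y| ≤ C) {x : K} {l : ℝ} :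
    Tendsto (fun n : ℕ => (∑ k ∈ Finset.Icc 1 n, S.Ufun^[k] g x) / (n : ℝ)) atTop (𝓝 l) ↔
      Tendsto (birkhoffAverage ℝ (markovOperator S.kernel) (· x) · g) atTop (𝓝 l) := by
  rw [S.Ufun_eq_markovOperator]
  refine tendsto_sum_Icc_iterate_div_iff (T := markovOperator S.kernel) (φ := (· x)) (a := g)
    (isBounded_iff_forall_norm_le.2 ⟨C, ?_⟩)
  rintro _ ⟨k, rfl⟩
  exact abs_markovOperator_iterate_le hC k x

end CMS

lemma properSpace_of_isCompact_closure {X : Type*} [PseudoMetricSpace X]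
    (h : ∀ A : Set X, Bornology.IsBounded A → IsCompact (closure A)) : ProperSpace X :=
  ⟨fun _ _ => by simpa using h _ Metric.isBounded_closedBall⟩

theorem cms_unique_iff_cesaro_general
    {K : Type*} [MetricSpace K] [ProperSpace K] [MeasurableSpace K] [BorelSpace K]
    {N : ℕ} {E : Type*} [Fintype E] (S : CMS K N E)
    (hOpen : ∀ i, IsOpen (S.Ks i))
    (hCont : ∀ e, ContinuousOn (S.p e) (S.Ks (S.ι e)))
    (μ : Measure K) [IsProbabilityMeasure μ] :
    (∀ ν : Measure K, IsProbabilityMeasure ν → S.adjoint ν = ν → ν = μ) ↔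
      (∀ (x : K) (g : K → ℝ), Continuous g → (∃ C : ℝ, ∀ y, |g y| ≤ C) →
        Tendsto (fun n : ℕ => (∑ k ∈ Finset.Icc 1 n, (S.Ufun)^[k] g x) / (n : ℝ))
          atTop (𝓝 (∫ y, g y ∂μ))) := by
  simp only [← S.invariant_kernel_iff]
  refine ((CMS.isFeller_kernel hOpen hCont).forall_invariant_eq_iff_tendsto_birkhoffAverage
    CMS.isTightMeasureSet_range_meanOccupation_kernel_dirac).trans
      ⟨fun h x g hg ⟨C, hC⟩ => ?_, fun h x g => ?_⟩
  · exact (CMS.tendsto_cesaro_iff_tendsto_birkhoffAverage hC).2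
      (h x (.ofNormedAddCommGroup g hg C hC))
  · exact (CMS.tendsto_cesaro_iff_tendsto_birkhoffAverage g.norm_coe_le_norm).1
      (h x g g.continuous ⟨‖g‖, g.norm_coe_le_norm⟩)

theorem cms_unique_iff_cesaro
    {K : Type*} [MetricSpace K] [MeasurableSpace K] [BorelSpace K]
    {N : ℕ} {E : Type*} [Fintype E] (S : CMS K N E)
    (hProper : ∀ A : Set K, Bornology.IsBounded A → IsCompact (closure A))
    (hOpen : ∀ i, IsOpen (S.Ks i))
    (hCont : ∀ e, ContinuousOn (S.p e) (S.Ks (S.ι e)))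
    (μ : Measure K) (hμ : IsProbabilityMeasure μ) (hinv : S.adjoint μ = μ) :
    (∀ ν : Measure K, IsProbabilityMeasure ν → S.adjoint ν = ν → ν = μ) ↔
      (∀ (x : K) (g : K → ℝ), Continuous g → (∃ C : ℝ, ∀ y, |g y| ≤ C) →
        Tendsto (fun n : ℕ => (∑ k ∈ Finset.Icc 1 n, (S.Ufun)^[k] g x) / (n : ℝ))
          atTop (nhds (∫ y, g y ∂μ))) := by
  have := properSpace_of_isCompact_closure hProper
  exact cms_unique_iff_cesaro_general S hOpen hCont μ
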